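/- Let I ⊂ ℝ be a bounded open interval, φ : I → ℝ a convex C² function, κ = φ'', and U = {x ∈ I : κ(x) > 0}. Let 1 ≤ r < 2. Then there is a constant C_r, depending only on r, such that for every measurable g : I → ℂ, ∬_{U×U, x≠y} (|g(x)|^r |g(y)|^r κ(x)^{r/3} κ(y)^{r/3}) / |φ'(x) − φ'(y)|^{r−1} dx dy ≤ C_r ( ∫_U |g(x)|^{2r/(3−r)} κ(x)^{1/3} dx )^{3−r}. -/

import Mathlib

open MeasureTheory Set


lemma lint_abs (f : ℝ → ENNReal) : ∫⁻ t, f |t| ≤ 2 * ∫⁻ t in Ioi (0:ℝ), f t := by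
  have h1 : ∫⁻ t in Ioi (0:ℝ), f |t| = ∫⁻ t in Ioi (0:ℝ), f t := by
    apply setLIntegral_congr_fun measurableSet_Ioi
    intro t ht
    simp only [abs_of_pos (show (0:ℝ) < t from ht)]
  have h2 : ∫⁻ t in Iio (0:ℝ), f |t| = ∫⁻ t in Ioi (0:ℝ), f |t| := by
    rw [← lintegral_indicator measurableSet_Iio, ← lintegral_indicator measurableSet_Ioi,
      ← lintegral_neg_eq_self]
    congr 1; ext t
    simp [indicator]
  have h3 : ∫⁻ t, f |t| = (∫⁻ t in Iio (0:ℝ), f |t|) + ∫⁻ t in Ici (0:ℝ), f |t| := by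
    rw [← lintegral_add_compl _ measurableSet_Iio, compl_Iio]
  rw [h3, setLIntegral_congr Ioi_ae_eq_Ici.symm, h2, h1, two_mul]

lemma lint_near (l : ℝ) (hl : l < 1) (ρ : ℝ) (hρ : 0 < ρ) (c : ℝ) :
    ∫⁻ v, ENNReal.ofReal (if |c - v| ≤ ρ then |c - v| ^ (-l) else 0)
      ≤ ENNReal.ofReal (2 / (1 - l) * ρ ^ (1 - l)) := by
  rw [lintegral_sub_left_eq_self (fun t => ENNReal.ofReal (if |t| ≤ ρ then |t| ^ (-l) else 0)) c]
  refine (lint_abs (fun t => ENNReal.ofReal (if t ≤ ρ then t ^ (-l) else 0))).trans ?_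
  have h1 : ∫⁻ t in Ioi (0:ℝ), ENNReal.ofReal (if t ≤ ρ then t ^ (-l) else 0)
      = ∫⁻ t in Ioc 0 ρ, ENNReal.ofReal (t ^ (-l)) := by
    rw [← lintegral_indicator measurableSet_Ioi, ← lintegral_indicator measurableSet_Ioc]
    congr 1; ext t
    by_cases h : 0 < t <;> by_cases h' : t ≤ ρ <;> simp [indicator, h, h']
  have hi : IntervalIntegrable (fun x : ℝ => x ^ (-l)) volume 0 ρ :=
    intervalIntegral.intervalIntegrable_rpow' (by linarith)
  rw [intervalIntegrable_iff_integrableOn_Ioc_of_le hρ.le] at hi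
  have h2 := integral_rpow (a := 0) (b := ρ) (r := -l) (Or.inl (by linarith))
  rw [intervalIntegral.integral_of_le hρ.le] at h2
  rw [h1, ← ofReal_integral_eq_lintegral_ofReal hi, h2, ← ENNReal.ofReal_ofNat,
    ← ENNReal.ofReal_mul (by norm_num)]
  · apply ENNReal.ofReal_le_ofReal
    rw [Real.zero_rpow (by linarith), show -l + 1 = 1 - l by ring]
    apply le_of_eq; ring
  · filter_upwards [ae_restrict_mem measurableSet_Ioc] with t ht
    exact Real.rpow_nonneg ht.1.le _

lemma lint_far (ρ : ℝ) (hρ : 0 < ρ) (c : ℝ) :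
    ∫⁻ v, ENNReal.ofReal (if |c - v| ≤ ρ then 0 else |c - v| ^ (-2 : ℝ))
      ≤ ENNReal.ofReal (2 * ρ⁻¹) := by
  rw [lintegral_sub_left_eq_self
    (fun t => ENNReal.ofReal (if |t| ≤ ρ then 0 else |t| ^ (-2 : ℝ))) c]
  refine (lint_abs (fun t => ENNReal.ofReal (if t ≤ ρ then 0 else t ^ (-2 : ℝ)))).trans ?_
  have h1 : ∫⁻ t in Ioi (0:ℝ), ENNReal.ofReal (if t ≤ ρ then 0 else t ^ (-2 : ℝ))
      = ∫⁻ t in Ioi ρ, ENNReal.ofReal (t ^ (-2 : ℝ)) := by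
    rw [← lintegral_indicator measurableSet_Ioi, ← lintegral_indicator measurableSet_Ioi]
    congr 1; ext t
    by_cases h' : t ≤ ρ
    · simp [indicator, h']
    · have : 0 < t := by linarith
      have h'' : ρ < t := by linarith
      simp [indicator, h', this, h'']
  have hi := integrableOn_Ioi_rpow_of_lt (a := -2) (by norm_num) hρ
  have h2 := integral_Ioi_rpow_of_lt (a := -2) (by norm_num) hρ
  rw [h1, ← ofReal_integral_eq_lintegral_ofReal hi, h2, ← ENNReal.ofReal_ofNat,
    ← ENNReal.ofReal_mul (by norm_num)]
  · apply ENNReal.ofReal_le_ofReal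
    rw [show (-2:ℝ) + 1 = -1 by norm_num, Real.rpow_neg_one]
    apply le_of_eq; ring
  · filter_upwards [ae_restrict_mem measurableSet_Ioi] with t ht
    exact Real.rpow_nonneg (hρ.trans ht).le _

lemma numer (l : ℝ) (h0 : 0 < l) (h1 : l < 1) (n f : ℝ) (hn : 0 < n) (hf : 0 < f) :
    f * (2 / (1 - l) * (n * f ^ (-(2 / (2 - l)))) ^ (1 - l))
      + n ^ (1 - l / 2) * (2 * (n * f ^ (-(2 / (2 - l))))⁻¹) ^ (l / 2)
    ≤ (2 / (1 - l) + 2) * (n ^ (1 - l) * f ^ (l / (2 - l))) := by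
  have h2 : (2 - l) ≠ 0 := by linarith
  have e1 : f * (2 / (1 - l) * (n * f ^ (-(2 / (2 - l)))) ^ (1 - l))
      = 2 / (1 - l) * (n ^ (1 - l) * f ^ (l / (2 - l))) := by
    rw [Real.mul_rpow hn.le (by positivity), ← Real.rpow_mul hf.le]
    have : f ^ (l / (2 - l)) = f * f ^ (-(2 / (2 - l)) * (1 - l)) := by
      rw [← Real.rpow_one_add' hf.le]
      · congr 1; field_simp; ring
      · have : 1 + -(2 / (2 - l)) * (1 - l) = l / (2 - l) := by field_simp; ring
        rw [this]; positivity
    rw [this]; ring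
  have e2 : n ^ (1 - l / 2) * (2 * (n * f ^ (-(2 / (2 - l))))⁻¹) ^ (l / 2)
      = 2 ^ (l / 2) * (n ^ (1 - l) * f ^ (l / (2 - l))) := by
    rw [Real.mul_rpow (by norm_num) (by positivity), mul_inv, Real.rpow_neg hf.le, inv_inv,
      Real.mul_rpow (by positivity) (by positivity), ← Real.rpow_mul hf.le,
      ← Real.rpow_neg_one n, ← Real.rpow_mul hn.le]
    have a1 : n ^ (1 - l) = n ^ (1 - l / 2) * n ^ (-1 * (l / 2)) := by
      rw [← Real.rpow_add hn]; congr 1; ring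
    rw [a1, show 2 / (2 - l) * (l / 2) = l / (2 - l) by field_simp]; ring
  rw [e1, e2, add_mul]
  have : (2:ℝ) ^ (l / 2) ≤ 2 := by
    calc (2:ℝ) ^ (l / 2) ≤ 2 ^ (1:ℝ) := Real.rpow_le_rpow_of_exponent_le (by norm_num) (by linarith)
      _ = 2 := by norm_num
  gcongr

/-- pointwise estimate -/
lemma hls_point (l : ℝ) (h0 : 0 ≤ l) (h1 : l < 1) (μ : Measure ℝ)
    (ψ : ℝ → ℝ) (hψ : Measurable ψ)
    (hμ : ∀ h : ℝ → ENNReal, Measurable h → ∫⁻ y, h (ψ y) ∂μ ≤ ∫⁻ v, h v)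
    (F : ℝ → ℝ) (hF : Measurable F) (hF0 : ∀ x, 0 ≤ F x) (n : ℝ) (hn : 0 < n)
    (hN : ∫⁻ y, ENNReal.ofReal (F y ^ (2 / (2 - l))) ∂μ = ENNReal.ofReal n)
    (f : ℝ) (hf : 0 < f) (c : ℝ) :
    ∫⁻ y, (if F y ≤ f then ENNReal.ofReal (F y) * ENNReal.ofReal (|c - ψ y| ^ (-l)) else 0) ∂μ
      ≤ ENNReal.ofReal ((2 / (1 - l) + 2) * (n ^ (1 - l) * f ^ (l / (2 - l)))) := by
  rcases h0.eq_or_lt with rfl | hl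
  · have e : (2:ℝ) / (2 - 0) = 1 := by norm_num
    simp only [e, Real.rpow_one] at hN
    calc _ ≤ ∫⁻ y, ENNReal.ofReal (F y) ∂μ := by
          apply lintegral_mono
          intro y
          dsimp only
          split_ifs <;> simp
      _ = ENNReal.ofReal n := hN
      _ ≤ _ := by
          apply ENNReal.ofReal_le_ofReal
          norm_num; linarith
  set ρ := n * f ^ (-(2 / (2 - l))) with hρdef
  have hρ : 0 < ρ := by positivity
  have hmn : Measurable (fun v : ℝ => ENNReal.ofReal (if |c - v| ≤ ρ then |c - v| ^ (-l) else 0)) := by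
    apply Measurable.ennreal_ofReal
    refine Measurable.ite (measurableSet_le (by fun_prop) (by fun_prop)) (by fun_prop) (by fun_prop)
  have hmf : ∀ q : ℝ, Measurable
      (fun v : ℝ => ENNReal.ofReal (if |c - v| ≤ ρ then 0 else |c - v| ^ q)) := by
    intro q
    apply Measurable.ennreal_ofReal
    refine Measurable.ite (measurableSet_le (by fun_prop) (by fun_prop)) (by fun_prop) (by fun_prop)
  have hnear := (hμ _ hmn).trans (lint_near l h1 ρ hρ c)
  have hfar := (hμ _ (hmf (-2))).trans (lint_far ρ hρ c)
  have hpq : (2 / (2 - l)).HolderConjugate (2 / l) := by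
    rw [Real.holderConjugate_iff]
    constructor
    · rw [lt_div_iff₀ (by linarith)]; linarith
    · have : (2 - l) ≠ 0 := by linarith
      field_simp; ring
  have hH := ENNReal.lintegral_mul_le_Lp_mul_Lq μ hpq (hF.ennreal_ofReal.aemeasurable)
    (((hmf (-l)).comp hψ).aemeasurable)
  have t1 : ∫⁻ y, ENNReal.ofReal (F y) ^ (2 / (2 - l)) ∂μ = ENNReal.ofReal n := by
    rw [← hN]; congr 1; ext y
    rw [ENNReal.ofReal_rpow_of_nonneg (hF0 y)]
    apply div_nonneg <;> linarith
  have t2 : ∫⁻ y, (((fun v : ℝ => ENNReal.ofReal (if |c - v| ≤ ρ then 0 else |c - v| ^ (-l))) ∘ ψ) y)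
      ^ (2 / l) ∂μ ≤ ENNReal.ofReal (2 * ρ⁻¹) := by
    refine le_trans (le_of_eq ?_) hfar
    congr 1; ext y
    simp only [Function.comp]
    split_ifs with h
    · rw [ENNReal.ofReal_zero, ENNReal.zero_rpow_of_pos (by positivity)]
    · rw [ENNReal.ofReal_rpow_of_nonneg (by positivity) (by positivity), ← Real.rpow_mul (abs_nonneg _)]
      congr 2; field_simp
  have t3 : ENNReal.ofReal n ^ (1 / (2 / (2 - l))) * ENNReal.ofReal (2 * ρ⁻¹) ^ (1 / (2 / l))
      = ENNReal.ofReal (n ^ (1 - l / 2) * (2 * ρ⁻¹) ^ (l / 2)) := by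
    rw [ENNReal.ofReal_rpow_of_pos hn, ENNReal.ofReal_rpow_of_pos (by positivity),
      ← ENNReal.ofReal_mul (by positivity)]
    congr 3
    · congr 1
      rw [one_div_div]; ring
    · rw [one_div_div]
  calc _ ≤ ∫⁻ y, (ENNReal.ofReal f * ENNReal.ofReal (if |c - ψ y| ≤ ρ then |c - ψ y| ^ (-l) else 0)
        + ENNReal.ofReal (F y) *
          ENNReal.ofReal (if |c - ψ y| ≤ ρ then 0 else |c - ψ y| ^ (-l))) ∂μ := by
        apply lintegral_mono
        intro y
        dsimp only
        by_cases hy : F y ≤ f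
        · by_cases h : |c - ψ y| ≤ ρ
          · simp only [hy, h, if_true, ENNReal.ofReal_zero, mul_zero, add_zero]
            gcongr
          · simp [hy, h]
        · simp [hy]
    _ = ENNReal.ofReal f * ∫⁻ y, ENNReal.ofReal (if |c - ψ y| ≤ ρ then |c - ψ y| ^ (-l) else 0) ∂μ
        + ∫⁻ y, ENNReal.ofReal (F y) *
          ENNReal.ofReal (if |c - ψ y| ≤ ρ then 0 else |c - ψ y| ^ (-l)) ∂μ := by
        have hc : Measurable (fun y =>
            ENNReal.ofReal (if |c - ψ y| ≤ ρ then |c - ψ y| ^ (-l) else 0)) := hmn.comp hψ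
        rw [lintegral_add_left (hc.const_mul _), lintegral_const_mul _ hc]
    _ ≤ ENNReal.ofReal f * ENNReal.ofReal (2 / (1 - l) * ρ ^ (1 - l))
        + ENNReal.ofReal (n ^ (1 - l / 2) * (2 * ρ⁻¹) ^ (l / 2)) := by
        refine add_le_add (by gcongr) ?_
        rw [← t3]
        refine le_trans hH ?_
        rw [t1]
        gcongr
    _ = ENNReal.ofReal (f * (2 / (1 - l) * ρ ^ (1 - l)) + n ^ (1 - l / 2) * (2 * ρ⁻¹) ^ (l / 2)) := by
        have : 0 < 1 - l := by linarith
        rw [← ENNReal.ofReal_mul hf.le, ← ENNReal.ofReal_add (by positivity) (by positivity)]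
    _ ≤ _ := ENNReal.ofReal_le_ofReal (numer l hl h1 n f hn hf)

lemma hls_abs (l : ℝ) (h0 : 0 ≤ l) (h1 : l < 1) (μ : Measure ℝ) [SFinite μ]
    (ψ : ℝ → ℝ) (hψ : Measurable ψ)
    (hμ : ∀ h : ℝ → ENNReal, Measurable h → ∫⁻ y, h (ψ y) ∂μ ≤ ∫⁻ v, h v)
    (F : ℝ → ℝ) (hF : Measurable F) (hF0 : ∀ x, 0 ≤ F x) :
    ∫⁻ x, ∫⁻ y, ENNReal.ofReal (F x) * (ENNReal.ofReal (F y) *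
        ENNReal.ofReal (|ψ x - ψ y| ^ (-l))) ∂μ ∂μ
      ≤ ENNReal.ofReal (2 * (2 / (1 - l) + 2)) *
        (∫⁻ y, ENNReal.ofReal (F y ^ (2 / (2 - l))) ∂μ) ^ (2 - l) := by
  have hl1 : 0 < 1 - l := by linarith
  have hl2 : 0 < 2 - l := by linarith
  set N := ∫⁻ y, ENNReal.ofReal (F y ^ (2 / (2 - l))) ∂μ with hNdef
  by_cases hNt : N = ⊤
  · rw [hNt, ENNReal.top_rpow_of_pos hl2, ENNReal.mul_top]
    · exact le_top
    · simp only [ne_eq, ENNReal.ofReal_eq_zero, not_le]; positivity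
  by_cases hNz : N = 0
  · rw [hNdef, lintegral_eq_zero_iff (by fun_prop)] at hNz
    have hz : ∀ᵐ x ∂μ, F x = 0 := by
      filter_upwards [hNz] with x hx
      simp only [Pi.zero_apply, ENNReal.ofReal_eq_zero] at hx
      by_contra hne
      have : 0 < F x := lt_of_le_of_ne (hF0 x) (Ne.symm hne)
      have := Real.rpow_pos_of_pos this (2 / (2 - l))
      linarith
    have : ∫⁻ x, ∫⁻ y, ENNReal.ofReal (F x) * (ENNReal.ofReal (F y) *
        ENNReal.ofReal (|ψ x - ψ y| ^ (-l))) ∂μ ∂μ = ∫⁻ x, 0 ∂μ := by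
      apply lintegral_congr_ae
      filter_upwards [hz] with x hx
      simp [hx]
    rw [this]; simp
  set n := N.toReal with hn'
  have hn : 0 < n := ENNReal.toReal_pos hNz hNt
  have hN : N = ENNReal.ofReal n := (ENNReal.ofReal_toReal hNt).symm
  set G : ℝ → ℝ → ENNReal := fun x y => ENNReal.ofReal (F x) *
    (if F y ≤ F x then ENNReal.ofReal (F y) * ENNReal.ofReal (|ψ x - ψ y| ^ (-l)) else 0) with hG
  have hGm : Measurable (Function.uncurry G) := by
    simp only [hG, Function.uncurry_def]
    refine Measurable.mul (by fun_prop) (Measurable.ite (measurableSet_le (by fun_prop) (by fun_prop)) (by fun_prop) (by fun_prop))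
  have key : ∫⁻ x, ∫⁻ y, G x y ∂μ ∂μ ≤ ENNReal.ofReal (2 / (1 - l) + 2) * N ^ (2 - l) := by
    calc _ ≤ ∫⁻ x, ENNReal.ofReal ((2 / (1 - l) + 2) * n ^ (1 - l)) *
          ENNReal.ofReal (F x ^ (2 / (2 - l))) ∂μ := by
          apply lintegral_mono
          intro x
          dsimp only
          rw [hG]; dsimp only
          rcases (hF0 x).eq_or_lt with hx | hx
          · simp [← hx]
          rw [lintegral_const_mul]
          · refine (mul_le_mul_right (hls_point l h0 h1 μ ψ hψ hμ F hF hF0 n hn hN (F x) hx (ψ x)) _).trans ?_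
            rw [← ENNReal.ofReal_mul hx.le, ← ENNReal.ofReal_mul (by positivity)]
            apply ENNReal.ofReal_le_ofReal
            have : F x ^ (2 / (2 - l)) = F x * F x ^ (l / (2 - l)) := by
              rw [← Real.rpow_one_add' hx.le (by positivity)]
              congr 1; field_simp; ring
            rw [this]; apply le_of_eq; ring
          · exact Measurable.ite (measurableSet_le (by fun_prop) (by fun_prop)) (by fun_prop) (by fun_prop)
      _ = ENNReal.ofReal ((2 / (1 - l) + 2) * n ^ (1 - l)) * N := by
          rw [lintegral_const_mul _ (by fun_prop)]
      _ = _ := by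
          rw [hN, ENNReal.ofReal_rpow_of_pos hn, ← ENNReal.ofReal_mul (by positivity),
            ← ENNReal.ofReal_mul (by positivity), mul_assoc]
          congr 2
          rw [show 2 - l = (1 - l) + 1 by ring, Real.rpow_add_one hn.ne']
  calc _ ≤ ∫⁻ x, ∫⁻ y, (G x y + G y x) ∂μ ∂μ := by
        apply lintegral_mono; intro x
        apply lintegral_mono; intro y
        simp only [hG]
        rcases le_total (F y) (F x) with h | h
        · rw [if_pos h]; exact le_self_add
        · rw [if_pos h, abs_sub_comm (ψ y), mul_left_comm]; exact le_add_self
    _ = ∫⁻ x, ∫⁻ y, G x y ∂μ ∂μ + ∫⁻ x, ∫⁻ y, G y x ∂μ ∂μ := by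
        have hc : Measurable (fun x => ∫⁻ y, G x y ∂μ) := hGm.lintegral_prod_right'
        rw [← lintegral_add_left hc]
        congr 1; ext x
        rw [lintegral_add_left]
        exact hGm.comp (by fun_prop : Measurable (fun y => (x, y)))
    _ = ∫⁻ x, ∫⁻ y, G x y ∂μ ∂μ + ∫⁻ x, ∫⁻ y, G x y ∂μ ∂μ := by
        congr 1
        rw [lintegral_lintegral_swap]
        exact (hGm.comp measurable_swap).aemeasurable
    _ ≤ _ := by
        rw [ENNReal.ofReal_mul (by norm_num), mul_assoc, ENNReal.ofReal_ofNat, two_mul]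
        gcongr

theorem maximal_restriction_stmt14 (r : ℝ) (hr1 : 1 ≤ r) (hr2 : r < 2) :
    ∃ C : ℝ, 0 < C ∧
      ∀ (a b : ℝ), a < b →
      ∀ (φ : ℝ → ℝ), ContDiffOn ℝ 2 φ (Ioo a b) → ConvexOn ℝ (Ioo a b) φ →
      ∀ (κ : ℝ → ℝ), (∀ x ∈ Ioo a b, κ x = deriv (deriv φ) x) →
      ∀ (U : Set ℝ), U = {x ∈ Ioo a b | 0 < κ x} →
      ∀ g : ℝ → ℂ, Measurable g →
        (∫⁻ p in {p : ℝ × ℝ | p.1 ∈ U ∧ p.2 ∈ U ∧ p.1 ≠ p.2},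
            ENNReal.ofReal ((‖g p.1‖ ^ r * ‖g p.2‖ ^ r * κ p.1 ^ (r / 3) * κ p.2 ^ (r / 3))
              / |deriv φ p.1 - deriv φ p.2| ^ (r - 1)))
          ≤ ENNReal.ofReal C *
            (∫⁻ x in U, ENNReal.ofReal (‖g x‖ ^ (2 * r / (3 - r)) * κ x ^ ((1 : ℝ) / 3)))
              ^ (3 - r) := by
  have hl1 : 0 < 1 - (r - 1) := by linarith
  refine ⟨2 * (2 / (1 - (r - 1)) + 2), by positivity, ?_⟩
  intro a b hab φ hφ hconv κ hκ U hU g hg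
  set k := deriv (deriv φ) with hk
  have hkm : Measurable k := measurable_deriv _
  have hψ : Measurable (deriv φ) := measurable_deriv _
  have hU' : U = Ioo a b ∩ {x | 0 < k x} := by
    rw [hU]; ext x
    constructor
    · rintro ⟨h, h'⟩; exact ⟨h, by rw [hκ x h] at h'; exact h'⟩
    · rintro ⟨h, h'⟩; exact ⟨h, by rw [hκ x h]; exact h'⟩
  have hUm : MeasurableSet U := by
    rw [hU']; exact measurableSet_Ioo.inter (measurableSet_lt measurable_const hkm)
  have hkU : ∀ x ∈ U, 0 < k x ∧ κ x = k x := by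
    intro x hx
    rw [hU'] at hx
    exact ⟨hx.2, hκ x hx.1⟩
  have hd1 : ∀ x ∈ Ioo a b, DifferentiableAt ℝ φ x := fun x hx =>
    (hφ.differentiableOn (by norm_num) x hx).differentiableAt (isOpen_Ioo.mem_nhds hx)
  have hd2 : ∀ x ∈ Ioo a b, HasDerivAt (deriv φ) (k x) x := by
    intro x hx
    have : ContDiffOn ℝ 1 (deriv φ) (Ioo a b) :=
      hφ.deriv_of_isOpen isOpen_Ioo (by norm_num)
    exact ((this.differentiableOn (by norm_num) x hx).differentiableAt
      (isOpen_Ioo.mem_nhds hx)).hasDerivAt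
  have hmono : MonotoneOn (deriv φ) (Ioo a b) := hconv.monotoneOn_deriv hd1
  have hlt : ∀ x ∈ U, ∀ y ∈ U, x < y → deriv φ x ≠ deriv φ y := by
    intro x hx y hy hxy heq
    have hxI : x ∈ Ioo a b := by rw [hU'] at hx; exact hx.1
    have hyI : y ∈ Ioo a b := by rw [hU'] at hy; exact hy.1
    have hc : ∀ z ∈ Icc x y, deriv φ z = deriv φ x := by
      intro z hz
      have hzI : z ∈ Ioo a b := ⟨hxI.1.trans_le hz.1, hz.2.trans_lt hyI.2⟩
      apply le_antisymm
      · rw [heq]; exact hmono hzI hyI hz.2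
      · exact hmono hxI hzI hz.1
    have e1 : HasDerivWithinAt (deriv φ) (k x) (Icc x y) x := (hd2 x hxI).hasDerivWithinAt
    have e2 : HasDerivWithinAt (deriv φ) 0 (Icc x y) x :=
      (hasDerivWithinAt_const x (Icc x y) (deriv φ x)).congr hc rfl
    have e3 := (uniqueDiffOn_Icc hxy x (left_mem_Icc.2 hxy.le)).eq_deriv _ e1 e2
    have := (hkU x hx).1
    linarith
  have hinj : InjOn (deriv φ) U := by
    intro x hx y hy h
    rcases lt_trichotomy x y with h' | h' | h'
    · exact absurd h (hlt x hx y hy h')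
    · exact h'
    · exact absurd h.symm (hlt y hy x hx h')
  have hdU : ∀ x ∈ U, HasDerivWithinAt (deriv φ) (k x) U x := by
    intro x hx
    have hxI : x ∈ Ioo a b := by rw [hU'] at hx; exact hx.1
    exact (hd2 x hxI).hasDerivWithinAt
  set w : ℝ → ENNReal := fun x => ENNReal.ofReal |k x| with hw
  have hwm : Measurable w := by fun_prop
  set μ : Measure ℝ := (volume.restrict U).withDensity w with hμdef
  have hμint : ∀ h : ℝ → ENNReal, Measurable h → ∫⁻ y, h y ∂μ = ∫⁻ y in U, w y * h y := by
    intro h hh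
    rw [hμdef, lintegral_withDensity_eq_lintegral_mul _ hwm hh]; rfl
  have hμ : ∀ h : ℝ → ENNReal, Measurable h → ∫⁻ y, h (deriv φ y) ∂μ ≤ ∫⁻ v, h v := by
    intro h hh
    rw [hμint (fun y => h (deriv φ y)) (hh.comp hψ), ← lintegral_image_eq_lintegral_abs_deriv_mul hUm hdU hinj]
    exact setLIntegral_le_lintegral _ _
  set F : ℝ → ℝ := fun x => ‖g x‖ ^ r * |k x| ^ (r / 3 - 1) with hFdef
  have hF : Measurable F := by fun_prop
  have hF0 : ∀ x, 0 ≤ F x := fun x => by positivity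
  have hmain := hls_abs (r - 1) (by linarith) (by linarith) μ (deriv φ) hψ hμ F hF hF0
  rw [show 2 - (r - 1) = 3 - r by ring] at hmain
  have hr3 : 0 < 3 - r := by linarith
  have eR : ∫⁻ y, ENNReal.ofReal (F y ^ (2 / (3 - r))) ∂μ
      = ∫⁻ x in U, ENNReal.ofReal (‖g x‖ ^ (2 * r / (3 - r)) * κ x ^ ((1 : ℝ) / 3)) := by
    rw [hμint _ (by fun_prop)]
    apply setLIntegral_congr_fun hUm
    intro x hx
    obtain ⟨hk0, hke⟩ := hkU x hx
    simp only [hw, hFdef, hke, abs_of_pos hk0]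
    rw [← ENNReal.ofReal_mul hk0.le, Real.mul_rpow (by positivity) (by positivity),
      ← Real.rpow_mul (norm_nonneg _), ← Real.rpow_mul hk0.le]
    congr 1
    have : k x ^ ((1:ℝ) / 3) = k x * k x ^ ((r / 3 - 1) * (2 / (3 - r))) := by
      have e : (1:ℝ) / 3 = 1 + (r / 3 - 1) * (2 / (3 - r)) := by field_simp; ring
      rw [e, Real.rpow_add hk0, Real.rpow_one]
    rw [this, show r * (2 / (3 - r)) = 2 * r / (3 - r) by ring]; ring
  rw [eR] at hmain
  refine le_trans ?_ hmain
  set K : ℝ × ℝ → ENNReal := fun p => w p.1 * (w p.2 * (ENNReal.ofReal (F p.1) *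
    (ENNReal.ofReal (F p.2) * ENNReal.ofReal (|deriv φ p.1 - deriv φ p.2| ^ (-(r - 1)))))) with hK
  have hKm : Measurable K := by fun_prop
  calc _ ≤ ∫⁻ p in U ×ˢ U,
            ENNReal.ofReal ((‖g p.1‖ ^ r * ‖g p.2‖ ^ r * κ p.1 ^ (r / 3) * κ p.2 ^ (r / 3))
              / |deriv φ p.1 - deriv φ p.2| ^ (r - 1)) := by
        apply lintegral_mono_set
        rintro p ⟨h1, h2, -⟩
        exact ⟨h1, h2⟩
    _ = ∫⁻ p in U ×ˢ U, K p := by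
        apply setLIntegral_congr_fun (hUm.prod hUm)
        rintro ⟨x, y⟩ ⟨hx, hy⟩
        obtain ⟨hx0, hxe⟩ := hkU x hx
        obtain ⟨hy0, hye⟩ := hkU y hy
        simp only [hK, hw, hFdef, hxe, hye, abs_of_pos hx0, abs_of_pos hy0]
        rw [← ENNReal.ofReal_mul (by positivity), ← ENNReal.ofReal_mul (by positivity),
          ← ENNReal.ofReal_mul (by positivity), ← ENNReal.ofReal_mul (by positivity)]
        congr 1
        have e : ∀ t : ℝ, 0 < t → t ^ (r / 3) = t * t ^ (r / 3 - 1) := by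
          intro t ht
          rw [show r / 3 = 1 + (r / 3 - 1) by ring, Real.rpow_add ht, Real.rpow_one]
          ring_nf
        rw [e _ hx0, e _ hy0, Real.rpow_neg (abs_nonneg _)]
        ring
    _ = ∫⁻ x in U, ∫⁻ y in U, K (x, y) := by
        rw [Measure.volume_eq_prod, ← Measure.prod_restrict, lintegral_prod _ hKm.aemeasurable]
    _ = _ := by
        rw [hμint _ (Measurable.lintegral_prod_right' (f := fun p : ℝ × ℝ => ENNReal.ofReal (F p.1) *
          (ENNReal.ofReal (F p.2) * ENNReal.ofReal (|deriv φ p.1 - deriv φ p.2| ^ (-(r - 1)))))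
          (by fun_prop))]
        congr 1; ext x
        rw [hμint _ (by fun_prop), ← lintegral_const_mul _ (by fun_prop)]
    _ ≤ _ := le_rfl
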